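/- Let F be a union-closed family on n elements with m sets, and let A ∈ F have level i ≥ 2. Then the tent T(A) is itself a union-closed family (closed under unions of its members) and its height number equals 2; in particular, for any two distinct sets B, C ∈ T(A) \ {A} one has B ∪ C = A. -/

import Mathlib

open Finset

/-- The minimal members of a family of finite sets: those `A` such that no
member `B ≠ A` satisfies `B ⊆ A`. -/
def minimalSets (G : Finset (Finset ℕ)) : Finset (Finset ℕ) :=
  G.filter fun A => ∀ B ∈ G, B ≠ A → ¬ B ⊆ A

/-- The family remaining after removing the first `i` layers of the height
decomposition. -/
def rest (F : Finset (Finset ℕ)) : ℕ → Finset (Finset ℕ)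
  | 0 => F
  | i + 1 => rest F i \ minimalSets (rest F i)

/-- The `i`-th layer `π_i` of the height decomposition (meaningful for `i ≥ 1`):
`π_{i+1}` is the family of minimal members of `F \ (π₁ ∪ ⋯ ∪ π_i)`. -/
def layer (F : Finset (Finset ℕ)) : ℕ → Finset (Finset ℕ)
  | 0 => ∅
  | i + 1 => minimalSets (rest F i)

/-- The height number `H(F)`: the least `H` with `F = π₁ ∪ ⋯ ∪ π_H`,
equivalently the least `H` with `rest F H = ∅`. -/
noncomputable def height (F : Finset (Finset ℕ)) : ℕ :=
  sInf {H : ℕ | rest F H = ∅}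

/-- `F` is a union-closed family on `n` elements with `m` sets: a finite family
of `m` distinct nonempty finite sets whose union is `{1, …, n}`, closed under
unions. -/
def IsUC (F : Finset (Finset ℕ)) (n m : ℕ) : Prop :=
  F.Nonempty ∧ F.card = m ∧ (∀ A ∈ F, A.Nonempty) ∧
    F.sup id = Finset.Icc 1 n ∧ ∀ A ∈ F, ∀ B ∈ F, A ∪ B ∈ F

/-- The tent `T(A)` of a set `A` of level `i ≥ 2`: the family
`{A} ∪ {B ∈ π_{i−1} : B ⊆ A}`. -/
def tent (F : Finset (Finset ℕ)) (i : ℕ) (A : Finset ℕ) : Finset (Finset ℕ) :=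
  insert A ((layer F (i - 1)).filter fun B => B ⊆ A)

/-- `F` is separating: every pair of distinct elements of `{1, …, n}` is
separated by some member of `F`. -/
def Separating (F : Finset (Finset ℕ)) (n : ℕ) : Prop :=
  ∀ x ∈ Finset.Icc 1 n, ∀ y ∈ Finset.Icc 1 n, x ≠ y →
    ∃ A ∈ F, (x ∈ A ∧ y ∉ A) ∨ (y ∈ A ∧ x ∉ A)

/-!
Two distinct sets `B, C ∈ π_{i-1}` inside `A` have a union in `F` that belongs to none of the layers
`π₁, …, π_{i-1}`: each remainder is closed upwards in `F`, and `B ∪ C` is not minimal in the last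
one. As `B ∪ C ⊆ A` and `A` is minimal in what remains after these layers, `B ∪ C = A`. Hence `T(A)`
is a nonempty antichain with a single top element `A` added, which is union-closed and has height
`2`.
-/

theorem mem_minimalSets {G : Finset (Finset ℕ)} {A : Finset ℕ} :
    A ∈ minimalSets G ↔ Minimal (· ∈ G) A := by
  simp only [minimalSets, mem_filter, minimal_iff]
  grind

theorem minimalSets_singleton (A : Finset ℕ) : minimalSets {A} = {A} := by
  grind [minimalSets]

theorem isAntichain_minimalSets (G : Finset (Finset ℕ)) :
    IsAntichain (· ⊆ ·) (minimalSets G : Set (Finset ℕ)) :=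
  fun _ hB _ hC hBC hsub =>
    hBC ((mem_minimalSets.1 hC).eq_of_le (mem_minimalSets.1 hB).prop hsub)

theorem isAntichain_layer (F : Finset (Finset ℕ)) (k : ℕ) :
    IsAntichain (· ⊆ ·) (layer F k : Set (Finset ℕ)) := by
  cases k with
  | zero => simp [layer]
  | succ k => exact isAntichain_minimalSets (rest F k)

theorem minimalSets_insert {S : Finset (Finset ℕ)} {A : Finset ℕ} (hS : S.Nonempty)
    (hanti : IsAntichain (· ⊆ ·) (S : Set (Finset ℕ))) (hA : ∀ B ∈ S, B ⊂ A) :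
    minimalSets (insert A S) = S := by
  ext B
  rw [mem_minimalSets]
  constructor
  · intro hB
    obtain rfl | hBS := mem_insert.1 hB.prop
    · obtain ⟨C, hC⟩ := hS
      exact absurd (hA C hC) (hB.not_lt (mem_insert_of_mem hC))
    · exact hBS
  · refine fun hB => ⟨mem_insert_of_mem hB, fun C hC hCB => ?_⟩
    obtain rfl | hCS := mem_insert.1 hC
    · exact (hA B hB).subset
    · exact (hanti.eq hCS hB hCB).ge

theorem rest_antitone (F : Finset (Finset ℕ)) : Antitone (rest F) :=
  antitone_nat_of_succ_le fun _ => sdiff_subset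

theorem height_eq_succ_iff {F : Finset (Finset ℕ)} {k : ℕ} :
    height F = k + 1 ↔ rest F (k + 1) = ∅ ∧ rest F k ≠ ∅ :=
  Nat.sInf_upward_closed_eq_succ_iff
    (fun _ _ hkl hk => subset_empty.1 ((rest_antitone F hkl).trans_eq hk)) k

theorem height_eq_succ_of_rest_eq_singleton {F : Finset (Finset ℕ)} {A : Finset ℕ} {k : ℕ}
    (h : rest F k = {A}) : height F = k + 1 := by
  rw [height_eq_succ_iff, rest, h, minimalSets_singleton]
  exact ⟨Finset.sdiff_self _, singleton_ne_empty A⟩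

theorem height_insert_eq_two {S : Finset (Finset ℕ)} {A : Finset ℕ} (hS : S.Nonempty)
    (hanti : IsAntichain (· ⊆ ·) (S : Set (Finset ℕ))) (hA : ∀ B ∈ S, B ⊂ A) :
    height (insert A S) = 2 := by
  have hAS : A ∉ S := fun h => (hA A h).ne rfl
  apply height_eq_succ_of_rest_eq_singleton (A := A)
  rw [rest, rest, minimalSets_insert hS hanti hA, insert_sdiff_cancel hAS]

theorem supClosed_insert_of_pairwise_sup_eq {α : Type*} [SemilatticeSup α] {s : Set α} {a : α}
    (ha : a ∈ upperBounds s) (hs : s.Pairwise fun b c => b ⊔ c = a) :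
    SupClosed (insert a s) := by
  rintro b (rfl | hb) c (rfl | hc)
  · exact Or.inl (sup_idem _)
  · exact Or.inl (sup_eq_left.2 (ha hc))
  · exact Or.inl (sup_eq_right.2 (ha hb))
  · obtain rfl | hbc := eq_or_ne b c
    · exact Or.inr ((sup_idem b).symm ▸ hb)
    · exact Or.inl (hs hb hc hbc)

theorem IsUC.supClosed {F : Finset (Finset ℕ)} {n m : ℕ} (hF : IsUC F n m) :
    SupClosed (F : Set (Finset ℕ)) :=
  fun B hB C hC => hF.2.2.2.2 B hB C hC

section Layers

variable {F : Finset (Finset ℕ)} {A B C : Finset ℕ} {k : ℕ}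

theorem mem_rest_of_subset (hB : B ∈ rest F k) (hBC : B ⊆ C) (hC : C ∈ F) : C ∈ rest F k := by
  induction k with
  | zero => exact hC
  | succ k ih =>
    obtain ⟨hBk, hBmin⟩ := mem_sdiff.1 hB
    refine mem_sdiff.2 ⟨ih hBk, fun hCmin => hBmin ?_⟩
    rwa [(mem_minimalSets.1 hCmin).eq_of_le hBk hBC]

theorem notMem_layer_of_mem_layer_succ (hA : A ∈ layer F (k + 1)) : A ∉ layer F k := by
  cases k with
  | zero => exact notMem_empty A
  | succ k => exact (mem_sdiff.1 (mem_minimalSets.1 hA).prop).2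

theorem exists_mem_layer_subset_of_mem_rest (hA : A ∈ rest F k) :
    ∃ B ∈ layer F (k + 1), B ⊆ A := by
  obtain ⟨B, hBA, hB⟩ := (rest F k).exists_le_minimal hA
  exact ⟨B, mem_minimalSets.2 hB, hBA⟩

theorem union_mem_rest_of_mem_layer (hF : SupClosed (F : Set (Finset ℕ)))
    (hB : B ∈ layer F k) (hC : C ∈ layer F k) (hBC : B ≠ C) : B ∪ C ∈ rest F k := by
  cases k with
  | zero => exact absurd hB (notMem_empty B)
  | succ k =>
    have hBk : B ∈ rest F k := (mem_minimalSets.1 hB).prop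
    have hCk : C ∈ rest F k := (mem_minimalSets.1 hC).prop
    have hF' : B ∪ C ∈ F :=
      hF (rest_antitone F k.zero_le hBk) (rest_antitone F k.zero_le hCk)
    refine mem_sdiff.2 ⟨mem_rest_of_subset hBk subset_union_left hF', fun hmin => hBC ?_⟩
    have hanti := isAntichain_minimalSets (rest F k)
    exact (hanti.eq hB hmin subset_union_left).trans (hanti.eq hC hmin subset_union_right).symm

theorem union_eq_of_mem_layer_of_subset (hF : SupClosed (F : Set (Finset ℕ)))
    (hA : A ∈ layer F (k + 1)) (hB : B ∈ layer F k) (hC : C ∈ layer F k) (hBC : B ≠ C)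
    (hBA : B ⊆ A) (hCA : C ⊆ A) : B ∪ C = A :=
  (mem_minimalSets.1 hA).eq_of_le (union_mem_rest_of_mem_layer hF hB hC hBC)
    (union_subset hBA hCA)

theorem erase_tent (hA : A ∈ layer F (k + 1)) :
    (tent F (k + 1) A).erase A = (layer F k).filter (· ⊆ A) :=
  erase_insert fun h => notMem_layer_of_mem_layer_succ hA (mem_filter.1 h).1

theorem erase_tent_pairwise_union_eq (hF : SupClosed (F : Set (Finset ℕ)))
    (hA : A ∈ layer F (k + 1)) :
    ((tent F (k + 1) A).erase A : Set (Finset ℕ)).Pairwise fun B C => B ∪ C = A := by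
  rw [erase_tent hA]
  intro B hB C hC hBC
  obtain ⟨hBk, hBA⟩ := mem_filter.1 hB
  obtain ⟨hCk, hCA⟩ := mem_filter.1 hC
  exact union_eq_of_mem_layer_of_subset hF hA hBk hCk hBC hBA hCA

theorem height_tent (hA : A ∈ layer F (k + 2)) : height (tent F (k + 2) A) = 2 := by
  have hAk : A ∈ rest F k := rest_antitone F k.le_succ (mem_minimalSets.1 hA).prop
  obtain ⟨B, hB, hBA⟩ := exists_mem_layer_subset_of_mem_rest hAk
  refine height_insert_eq_two ⟨B, mem_filter.2 ⟨hB, hBA⟩⟩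
    ((isAntichain_layer F (k + 1)).subset (filter_subset _ _)) fun C hC => ?_
  obtain ⟨hCk, hCA⟩ := mem_filter.1 hC
  exact hCA.ssubset_of_ne fun h => notMem_layer_of_mem_layer_succ hA (h ▸ hCk)

theorem supClosed_tent (hF : SupClosed (F : Set (Finset ℕ))) (hA : A ∈ layer F (k + 1)) :
    SupClosed (tent F (k + 1) A : Set (Finset ℕ)) := by
  have hunion := erase_tent_pairwise_union_eq hF hA
  rw [erase_tent hA] at hunion
  rw [tent, coe_insert]
  exact supClosed_insert_of_pairwise_sup_eq (fun B hB => (mem_filter.1 hB).2) hunion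

end Layers

/-- For `A ∈ F` of level `i ≥ 2`, the tent `T(A)` is union-closed
and has height number `2`; in particular any two distinct members of
`T(A) \ {A}` have union `A`. -/
theorem tent_is_uc_height_two (n m i : ℕ) (F : Finset (Finset ℕ)) (A : Finset ℕ)
    (hF : IsUC F n m) (hi : 2 ≤ i) (hA : A ∈ layer F i) :
    (∀ B ∈ tent F i A, ∀ C ∈ tent F i A, B ∪ C ∈ tent F i A) ∧
      height (tent F i A) = 2 ∧
      ∀ B ∈ (tent F i A).erase A, ∀ C ∈ (tent F i A).erase A,
        B ≠ C → B ∪ C = A := by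
  obtain ⟨k, rfl⟩ := Nat.exists_eq_add_of_le' hi
  have hunion := erase_tent_pairwise_union_eq hF.supClosed hA
  exact ⟨fun B hB C hC => supClosed_tent hF.supClosed hA hB hC, height_tent hA,
    fun B hB C hC hBC => hunion hB hC hBC⟩
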